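/- Assume (H1) and fix l ∈ ℝ^d; let L_l be a solution of L_l - L^*(L_l) = Σ_{i=1}^{2d} (e_i·l) A_i^* A_i - (m·l) I, and define Γ_l = Σ_{i=1}^{2d} [ A_i^* A_i (e_i·l − m·l)² + 2 (e_i·l − m·l) A_i^* L_l A_i ]. Then, with ΔM_k = Re Tr(ρ_k L_l) − Re Tr(ρ_{k-1} L_l) + (ΔX_k − m)·l the increments of the martingale associated to the quantum trajectory process (ρ_n, X_n), the normalized predictable quadratic variation converges almost surely: (1/n) Σ_{k=2}^n E[ (ΔM_k)² | F_{k-1} ] → σ_l² = Re Tr(ρ_∞ Γ_l) as n → ∞. -/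

import Mathlib

open MeasureTheory Filter Matrix Finset
open scoped ComplexOrder

noncomputable section

/-- The direction vectors `e_1, …, e_{2d}` in `ℤ^d`, with `e_{d+j} = -e_j`. -/
def dir (d : ℕ) (i : Fin (2 * d)) : Fin d → ℤ :=
  fun j => if (i : ℕ) < d then (if (j : ℕ) = (i : ℕ) then 1 else 0)
           else (if (j : ℕ) = (i : ℕ) - d then -1 else 0)

/-- The direction vectors viewed in `ℝ^d`. -/
def dirR (d : ℕ) (i : Fin (2 * d)) : Fin d → ℝ := fun j => (dir d i j : ℝ)

instance {k : ℕ} : MeasurableSpace (Matrix (Fin k) (Fin k) ℂ) := MeasurableSpace.pi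

/-- A density matrix: positive semidefinite with trace one. -/
def IsDensity {k : ℕ} (ρ : Matrix (Fin k) (Fin k) ℂ) : Prop := ρ.PosSemidef ∧ ρ.trace = 1

/-- The quantum trajectory process of the open quantum random walk. -/
structure IsQTraj {k d : ℕ} {Ω : Type} {mΩ : MeasurableSpace Ω}
    (A : Fin (2 * d) → Matrix (Fin k) (Fin k) ℂ)
    (μ : Measure Ω) (ℱ : Filtration ℕ mΩ)
    (ρ : ℕ → Ω → Matrix (Fin k) (Fin k) ℂ)
    (X : ℕ → Ω → Fin d → ℤ) : Prop where
  density : ∀ n, ∀ᵐ ω ∂μ, IsDensity (ρ n ω)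
  adapted_ρ : ∀ n, Measurable[ℱ n] (ρ n)
  adapted_X : ∀ n, Measurable[ℱ n] (X n)
  prob : ∀ (n : ℕ) (j : Fin (2 * d)),
    μ[(fun ω => if X (n + 1) ω = X n ω + dir d j then (1 : ℝ) else 0) | ℱ n]
      =ᵐ[μ] fun ω => ((A j * ρ n ω * (A j)ᴴ).trace).re
  update : ∀ (n : ℕ) (j : Fin (2 * d)), ∀ᵐ ω ∂μ,
    X (n + 1) ω = X n ω + dir d j →
      ρ (n + 1) ω = ((A j * ρ n ω * (A j)ᴴ).trace)⁻¹ • (A j * ρ n ω * (A j)ᴴ)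

/-- The drift vector `m = Σ_{i=1}^{2d} Tr(A_i ρ_∞ A_i^*) e_i ∈ ℝ^d`. -/
def mvec {k d : ℕ} (A : Fin (2 * d) → Matrix (Fin k) (Fin k) ℂ)
    (ρinf : Matrix (Fin k) (Fin k) ℂ) : Fin d → ℝ :=
  fun j => ∑ i, ((A i * ρinf * (A i)ᴴ).trace).re * dirR d i j

/-- The matrix `Γ_l = Σ_i [ (e_i·l − m·l)² A_i^* A_i + 2 (e_i·l − m·l) A_i^* L_l A_i ]`. -/
def Gammal {k d : ℕ} (A : Fin (2 * d) → Matrix (Fin k) (Fin k) ℂ)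
    (ρinf Ll : Matrix (Fin k) (Fin k) ℂ) (l : Fin d → ℝ) : Matrix (Fin k) (Fin k) ℂ :=
  ∑ i, ((((∑ j, dirR d i j * l j) - ∑ j, mvec A ρinf j * l j) ^ 2) • ((A i)ᴴ * A i) +
    (2 * ((∑ j, dirR d i j * l j) - ∑ j, mvec A ρinf j * l j)) • ((A i)ᴴ * Ll * A i))

/-!
Write `V_n = Re Tr(ρ_n L_l)` and `ξ_n = (X_{n+1} - X_n - m)·l`. The equation for `L_l` says that
`E[V_{n+1} + ξ_n | F_n] = V_n`, so `E[(ΔM_{n+1})² | F_n]` is a conditional variance; expanding it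
gives `E[V_{n+1}² | F_n] - V_n² + Re Tr(ρ_n Γ_l)`.

The Cesàro means of the first difference vanish: `V_{n+1}² - V_n²` telescopes, and
`V_{n+1}² - E[V_{n+1}² | F_n]` is a bounded martingale difference, to which the strong law applies
(almost sure convergence of the L²-bounded martingale `∑ D_n / (n + 1)`, then Kronecker's lemma).

The Cesàro means of `ρ_n` lie in the compact convex set of states. Since
`E[ρ_{n+1} | F_n] = L(ρ_n)`, the same strong law shows that their cluster points are invariant,
hence all equal to `ρ_∞`.
-/

open scoped Topology ProbabilityTheory

section CesaroMean

variable {E F : Type*} [AddCommGroup E] [Module ℝ E] [AddCommGroup F] [Module ℝ F]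

/-- The Cesàro mean of `x 0, …, x (n - 1)`, equal to `0` for `n = 0`. -/
def cesaroMean (x : ℕ → E) (n : ℕ) : E := (n : ℝ)⁻¹ • ∑ i ∈ range n, x i

lemma cesaroMean_add (x y : ℕ → E) (n : ℕ) :
    cesaroMean (fun i => x i + y i) n = cesaroMean x n + cesaroMean y n := by
  simp only [cesaroMean, sum_add_distrib, smul_add]

lemma cesaroMean_sub (x y : ℕ → E) (n : ℕ) :
    cesaroMean (fun i => x i - y i) n = cesaroMean x n - cesaroMean y n := by
  simp only [cesaroMean, sum_sub_distrib, smul_sub]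

lemma map_cesaroMean (f : E →ₗ[ℝ] F) (x : ℕ → E) (n : ℕ) :
    f (cesaroMean x n) = cesaroMean (fun i => f (x i)) n := by
  simp only [cesaroMean, map_smul, map_sum]

lemma cesaroMean_mem {K : Set E} (hK : Convex ℝ K) {x : ℕ → E} (hx : ∀ i, x i ∈ K) {n : ℕ}
    (hn : n ≠ 0) : cesaroMean x n ∈ K := by
  rw [cesaroMean, smul_sum]
  refine hK.sum_mem (fun _ _ => by positivity) ?_ fun i _ => hx i
  simp [hn]

section Topology

variable [TopologicalSpace E] [IsTopologicalAddGroup E] [ContinuousSMul ℝ E]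

lemma tendsto_cesaroMean_succ_sub {K : Set E} (hK : Bornology.IsVonNBounded ℝ K) {x : ℕ → E}
    (hx : ∀ i, x i ∈ K) :
    Tendsto (cesaroMean fun i => x (i + 1) - x i) atTop (𝓝 0) := by
  have h_inv := tendsto_inv_atTop_nhds_zero_nat (𝕜 := ℝ)
  have h_last : Tendsto (fun n : ℕ => (n : ℝ)⁻¹ • x n) atTop (𝓝 0) :=
    hK.smul_tendsto_zero (.of_forall hx) h_inv
  have h_first : Tendsto (fun n : ℕ => (n : ℝ)⁻¹ • x 0) atTop (𝓝 0) := by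
    simpa using h_inv.smul_const (x 0)
  have h_diff := h_last.sub h_first
  rw [sub_zero] at h_diff
  refine h_diff.congr fun n => ?_
  rw [cesaroMean, sum_range_sub, smul_sub]

lemma tendsto_cesaroMean_of_unique_fixedPoint [T2Space E] {K : Set E} (hK : IsCompact K)
    (hK_convex : Convex ℝ K) {Φ : E →ₗ[ℝ] E} (hΦ : Continuous Φ) {a : E}
    (ha : ∀ y ∈ K, Φ y = y → y = a) {x : ℕ → E} (hx : ∀ i, x i ∈ K)
    (h : Tendsto (cesaroMean fun i => x (i + 1) - Φ (x i)) atTop (𝓝 0)) :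
    Tendsto (cesaroMean x) atTop (𝓝 a) := by
  refine hK.tendsto_nhds_of_unique_mapClusterPt ?_ fun y hy hy_cluster => ha y hy ?_
  · filter_upwards [eventually_ne_atTop 0] with n hn using cesaroMean_mem hK_convex hx hn
  have h_fixed : Tendsto (fun n => Φ (cesaroMean x n) - cesaroMean x n) atTop (𝓝 0) := by
    have h_diff := (tendsto_cesaroMean_succ_sub (hK.isVonNBounded ℝ) hx).sub h
    rw [sub_zero] at h_diff
    refine h_diff.congr fun n => ?_
    rw [← cesaroMean_sub, map_cesaroMean, ← cesaroMean_sub]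
    simp only [sub_sub_sub_cancel_left]
  have h_cluster : MapClusterPt (Φ y - y) atTop fun n => Φ (cesaroMean x n) - cesaroMean x n :=
    hy_cluster.continuousAt_comp (hΦ.sub continuous_id).continuousAt
  exact sub_eq_zero.1 (eq_of_nhds_neBot (h_cluster.clusterPt.mono h_fixed))

lemma tendsto_inv_smul_sum_Icc_two {x : ℕ → E} {a : E} (h : Tendsto (cesaroMean x) atTop (𝓝 a)) :
    Tendsto (fun n : ℕ => (n : ℝ)⁻¹ • ∑ i ∈ Icc 2 n, x (i - 1)) atTop (𝓝 a) := by
  have h_first : Tendsto (fun n : ℕ => (n : ℝ)⁻¹ • x 0) atTop (𝓝 0) := by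
    simpa using (tendsto_inv_atTop_nhds_zero_nat (𝕜 := ℝ)).smul_const (x 0)
  have h_tail := h.sub h_first
  rw [sub_zero] at h_tail
  refine h_tail.congr' ?_
  filter_upwards [eventually_ge_atTop 1] with n hn
  rw [cesaroMean, ← smul_sub, range_eq_Ico, sum_eq_sum_Ico_succ_bot hn, add_sub_cancel_left,
    ← Ico_succ_right_eq_Icc, Nat.succ_eq_succ, ← sum_Ico_add' _ 1 n 1]
  simp only [zero_add, add_tsub_cancel_right]

end Topology

end CesaroMean

lemma tendsto_cesaroMean_zero_of_tendsto_sum_inv_smul {E : Type*} [NormedAddCommGroup E]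
    [NormedSpace ℝ E] {x : ℕ → E} {a : E}
    (h : Tendsto (fun n : ℕ => ∑ i ∈ range n, ((i : ℝ) + 1)⁻¹ • x i) atTop (𝓝 a)) :
    Tendsto (cesaroMean x) atTop (𝓝 0) := by
  set S : ℕ → E := fun n => ∑ i ∈ range n, ((i : ℝ) + 1)⁻¹ • x i with hS
  have summation_by_parts (n : ℕ) : ∑ i ∈ range n, x i = (n : ℝ) • S n - ∑ i ∈ range n, S i := by
    induction n with
    | zero => simp
    | succ n ih =>
      have hn : (n : ℝ) + 1 ≠ 0 := by positivity
      have hS_succ : ((n : ℝ) + 1) • S (n + 1) = ((n : ℝ) + 1) • S n + x n := by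
        simp only [hS, sum_range_succ, smul_add, smul_inv_smul₀ hn]
      rw [sum_range_succ, sum_range_succ, ih, Nat.cast_succ, hS_succ]
      module
  have h_diff := h.sub h.cesaro_smul
  rw [sub_self] at h_diff
  refine h_diff.congr' ?_
  filter_upwards [eventually_ne_atTop 0] with n hn
  rw [cesaroMean, summation_by_parts, smul_sub, inv_smul_smul₀ (Nat.cast_ne_zero.2 hn)]

section MartingaleDifference

variable {Ω : Type*} {mΩ : MeasurableSpace Ω} {μ : Measure Ω} {ℱ : Filtration ℕ mΩ}

/-- A square-integrable martingale difference sequence, indexed so that `D n` is the increment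
between the times `n` and `n + 1`. -/
structure IsL2MartingaleDiff (D : ℕ → Ω → ℝ) (ℱ : Filtration ℕ mΩ) (μ : Measure Ω) : Prop where
  stronglyMeasurable : ∀ n, StronglyMeasurable[ℱ (n + 1)] (D n)
  memLp : ∀ n, MemLp (D n) 2 μ
  condExp_eq_zero : ∀ n, μ[D n | ℱ n] =ᵐ[μ] 0

namespace IsL2MartingaleDiff

variable {D : ℕ → Ω → ℝ}

lemma smul (hD : IsL2MartingaleDiff D ℱ μ) (c : ℕ → ℝ) :
    IsL2MartingaleDiff (fun n => c n • D n) ℱ μ where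
  stronglyMeasurable n := (hD.stronglyMeasurable n).const_smul (c n)
  memLp n := (hD.memLp n).const_smul (c n)
  condExp_eq_zero n := by
    filter_upwards [condExp_smul (c n) (D n) (ℱ n) (μ := μ), hD.condExp_eq_zero n] with ω h_smul h0
    simp [h_smul, h0]

lemma stronglyMeasurable_sum (hD : IsL2MartingaleDiff D ℱ μ) (n : ℕ) :
    StronglyMeasurable[ℱ n] (∑ i ∈ range n, D i) :=
  Finset.stronglyMeasurable_sum _ fun i hi =>
    (hD.stronglyMeasurable i).mono (ℱ.mono (mem_range.1 hi))

lemma memLp_sum (hD : IsL2MartingaleDiff D ℱ μ) (n : ℕ) : MemLp (∑ i ∈ range n, D i) 2 μ :=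
  memLp_finsetSum' _ fun i _ => hD.memLp i

variable [IsFiniteMeasure μ]

lemma martingale_sum (hD : IsL2MartingaleDiff D ℱ μ) :
    Martingale (fun n => ∑ i ∈ range n, D i) ℱ μ := by
  refine martingale_of_condExp_sub_eq_zero_nat hD.stronglyMeasurable_sum
    (fun n => (hD.memLp_sum n).integrable one_le_two) fun n => ?_
  rw [sum_range_succ, add_sub_cancel_left]
  exact hD.condExp_eq_zero n

lemma integral_sum_mul_eq_zero (hD : IsL2MartingaleDiff D ℱ μ) (n : ℕ) :
    ∫ ω, ((∑ i ∈ range n, D i) * D n) ω ∂μ = 0 := by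
  have h_condExp : μ[(∑ i ∈ range n, D i) * D n | ℱ n] =ᵐ[μ] 0 := by
    filter_upwards [condExp_mul_of_stronglyMeasurable_left (hD.stronglyMeasurable_sum n)
      ((hD.memLp_sum n).integrable_mul (hD.memLp n)) ((hD.memLp n).integrable one_le_two),
      hD.condExp_eq_zero n] with ω h_pull h0
    simp [h_pull, h0]
  rw [← integral_condExp (ℱ.le n), integral_congr_ae h_condExp]
  simp

lemma integral_sum_sq (hD : IsL2MartingaleDiff D ℱ μ) (n : ℕ) :
    ∫ ω, (∑ i ∈ range n, D i) ω ^ 2 ∂μ = ∑ i ∈ range n, ∫ ω, D i ω ^ 2 ∂μ := by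
  induction n with
  | zero => simp
  | succ n ih =>
    set S : Ω → ℝ := ∑ i ∈ range n, D i
    have h_expand (ω : Ω) :
        (∑ i ∈ range (n + 1), D i) ω ^ 2 = S ω ^ 2 + 2 * (S * D n) ω + D n ω ^ 2 := by
      rw [sum_range_succ, Pi.add_apply, Pi.mul_apply]
      ring
    have h_cross : Integrable (fun ω => 2 * (S * D n) ω) μ :=
      ((hD.memLp_sum n).integrable_mul (hD.memLp n)).const_mul 2
    have h_sq : Integrable (fun ω => S ω ^ 2) μ := (hD.memLp_sum n).integrable_sq
    simp only [h_expand]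
    rw [integral_add (by fun_prop) (hD.memLp n).integrable_sq, integral_add h_sq h_cross,
      integral_const_mul, hD.integral_sum_mul_eq_zero n, ih, sum_range_succ, mul_zero, add_zero]

lemma ae_exists_tendsto_sum (hD : IsL2MartingaleDiff D ℱ μ)
    (h_summable : Summable fun n => ∫ ω, D n ω ^ 2 ∂μ) :
    ∀ᵐ ω ∂μ, ∃ a, Tendsto (fun n => ∑ i ∈ range n, D i ω) atTop (𝓝 a) := by
  set B : ℝ := μ.real Set.univ + ∑' n, ∫ ω, D n ω ^ 2 ∂μ
  have h_bdd (n : ℕ) : eLpNorm (∑ i ∈ range n, D i) 1 μ ≤ (B.toNNReal : ENNReal) := by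
    set S : Ω → ℝ := ∑ i ∈ range n, D i
    have hS := hD.memLp_sum n
    rw [eLpNorm_one_eq_lintegral_enorm,
      ← ofReal_integral_norm_eq_lintegral_enorm (hS.integrable one_le_two)]
    refine ENNReal.ofReal_le_ofReal ?_
    calc ∫ ω, ‖S ω‖ ∂μ ≤ ∫ ω, 1 + S ω ^ 2 ∂μ := by
          refine integral_mono (hS.integrable one_le_two).norm
            ((integrable_const 1).add hS.integrable_sq) fun ω => ?_
          rw [Real.norm_eq_abs, ← sq_abs]
          nlinarith [sq_nonneg (|S ω| - 1), abs_nonneg (S ω)]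
      _ = μ.real Set.univ + ∑ i ∈ range n, ∫ ω, D i ω ^ 2 ∂μ := by
          rw [integral_add (integrable_const 1) hS.integrable_sq, hD.integral_sum_sq]
          simp
      _ ≤ B := by
          refine add_le_add_right (h_summable.sum_le_tsum _ fun i _ => ?_) _
          exact integral_nonneg fun ω => sq_nonneg _
  simpa only [Finset.sum_apply]
    using hD.martingale_sum.submartingale.exists_ae_tendsto_of_bdd h_bdd

lemma ae_tendsto_cesaroMean_zero (hD : IsL2MartingaleDiff D ℱ μ) {C : ℝ}
    (hC : ∀ n, ∫ ω, D n ω ^ 2 ∂μ ≤ C) :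
    ∀ᵐ ω ∂μ, Tendsto (cesaroMean fun n => D n ω) atTop (𝓝 0) := by
  have h_inv_sq : Summable fun n : ℕ => (((n : ℝ) + 1)⁻¹) ^ 2 := by
    simpa using (summable_nat_add_iff 1).2 (Real.summable_nat_pow_inv.2 one_lt_two)
  have h_summable : Summable fun n : ℕ => ∫ ω, ((((n : ℝ) + 1)⁻¹) • D n) ω ^ 2 ∂μ := by
    refine (h_inv_sq.mul_right C).of_nonneg_of_le
      (fun n => integral_nonneg fun ω => sq_nonneg _) fun n => ?_
    simp only [Pi.smul_apply, smul_eq_mul, mul_pow, integral_const_mul]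
    exact mul_le_mul_of_nonneg_left (hC n) (sq_nonneg _)
  filter_upwards [(hD.smul fun n => ((n : ℝ) + 1)⁻¹).ae_exists_tendsto_sum h_summable]
    with ω ⟨a, ha⟩
  exact tendsto_cesaroMean_zero_of_tendsto_sum_inv_smul ha

end IsL2MartingaleDiff

variable [IsFiniteMeasure μ] {Y : ℕ → Ω → ℝ}

lemma isL2MartingaleDiff_sub_condExp (hY : StronglyAdapted ℱ Y) (hY₂ : ∀ n, MemLp (Y n) 2 μ) :
    IsL2MartingaleDiff (fun n => Y (n + 1) - μ[Y (n + 1) | ℱ n]) ℱ μ where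
  stronglyMeasurable n := (hY (n + 1)).sub (stronglyMeasurable_condExp.mono (ℱ.mono n.le_succ))
  memLp n := (hY₂ (n + 1)).sub ((hY₂ (n + 1)).condExp one_le_two)
  condExp_eq_zero n := by
    have h_sub := condExp_sub (m := ℱ n) ((hY₂ (n + 1)).integrable one_le_two)
      (integrable_condExp (m := ℱ n) (f := Y (n + 1)) (μ := μ))
    rwa [condExp_of_stronglyMeasurable (ℱ.le n) stronglyMeasurable_condExp integrable_condExp,
      sub_self] at h_sub

lemma integral_sub_condExp_sq_le {m : MeasurableSpace Ω} (hm : m ≤ mΩ) {Z : Ω → ℝ}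
    (hZ : MemLp Z 2 μ) : ∫ ω, (Z - μ[Z | m]) ω ^ 2 ∂μ ≤ ∫ ω, Z ω ^ 2 ∂μ :=
  calc ∫ ω, (Z - μ[Z | m]) ω ^ 2 ∂μ = ∫ ω, Var[Z; μ | m] ω ∂μ := (integral_condExp hm).symm
    _ ≤ ∫ ω, μ[Z ^ 2 | m] ω ∂μ :=
        integral_mono_ae ProbabilityTheory.integrable_condVar integrable_condExp
          (ProbabilityTheory.condVar_ae_le_condExp_sq hm hZ)
    _ = ∫ ω, Z ω ^ 2 ∂μ := integral_condExp hm

lemma ae_tendsto_cesaroMean_sub_condExp (hY : StronglyAdapted ℱ Y) (hY₂ : ∀ n, MemLp (Y n) 2 μ)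
    {C : ℝ} (hC : ∀ n, ∫ ω, Y n ω ^ 2 ∂μ ≤ C) :
    ∀ᵐ ω ∂μ, Tendsto (cesaroMean fun n => Y (n + 1) ω - μ[Y (n + 1) | ℱ n] ω) atTop (𝓝 0) :=
  (isL2MartingaleDiff_sub_condExp hY hY₂).ae_tendsto_cesaroMean_zero fun n =>
    (integral_sub_condExp_sq_le (ℱ.le n) (hY₂ (n + 1))).trans (hC (n + 1))

lemma ae_tendsto_cesaroMean_sub_condExp_of_bounded (hY : StronglyAdapted ℱ Y) {C : ℝ}
    (hC : ∀ n, ∀ᵐ ω ∂μ, |Y n ω| ≤ C) :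
    ∀ᵐ ω ∂μ, Tendsto (cesaroMean fun n => Y (n + 1) ω - μ[Y (n + 1) | ℱ n] ω) atTop (𝓝 0) := by
  have hY₂ (n : ℕ) : MemLp (Y n) 2 μ :=
    .of_bound ((hY n).mono (ℱ.le n)).aestronglyMeasurable C (hC n)
  refine ae_tendsto_cesaroMean_sub_condExp hY hY₂ (C := ∫ _, C ^ 2 ∂μ) fun n => ?_
  refine integral_mono_ae (hY₂ n).integrable_sq (integrable_const _) ?_
  filter_upwards [hC n] with ω hω using sq_le_sq' (abs_le.1 hω).1 (abs_le.1 hω).2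

lemma ae_tendsto_cesaroMean_condExp_sub_of_bounded (hY : StronglyAdapted ℱ Y) {C : ℝ}
    (hC : ∀ n, ∀ᵐ ω ∂μ, |Y n ω| ≤ C) :
    ∀ᵐ ω ∂μ, Tendsto (cesaroMean fun n => μ[Y (n + 1) | ℱ n] ω - Y n ω) atTop (𝓝 0) := by
  filter_upwards [ae_all_iff.2 hC, ae_tendsto_cesaroMean_sub_condExp_of_bounded hY hC]
    with ω h_le h_slln
  have h_mem (n : ℕ) : Y n ω ∈ Metric.closedBall 0 C := mem_closedBall_zero_iff.2 (h_le n)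
  have h_telescope := tendsto_cesaroMean_succ_sub (NormedSpace.isVonNBounded_closedBall ℝ ℝ C) h_mem
  have h_diff := h_telescope.sub h_slln
  rw [sub_zero] at h_diff
  refine h_diff.congr fun n => ?_
  rw [← cesaroMean_sub]
  simp only [sub_sub_sub_cancel_left]

end MartingaleDifference

section PosSemidef

variable {n 𝕜 : Type*} [RCLike 𝕜]

lemma norm_apply_le_re_trace_of_posSemidef [Fintype n] {M : Matrix n n 𝕜} (hM : M.PosSemidef)
    (i j : n) : ‖M i j‖ ≤ RCLike.re M.trace := by
  have h_diag_nonneg (a : n) : 0 ≤ RCLike.re (M a a) := (RCLike.nonneg_iff.1 hM.diag_nonneg).1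
  have h_diag_le (a : n) : RCLike.re (M a a) ≤ RCLike.re M.trace := by
    rw [Matrix.trace, map_sum]
    exact single_le_sum (f := fun b => RCLike.re (M b b)) (fun b _ => h_diag_nonneg b) (mem_univ a)
  have h_minor : ‖M i j‖ ^ 2 ≤ RCLike.re (M i i) * RCLike.re (M j j) := by
    have h_det := (RCLike.nonneg_iff.1 (hM.submatrix ![i, j]).det_nonneg).1
    have h_real := RCLike.conj_eq_iff_im.1 (hM.isHermitian.apply i i)
    rw [Matrix.det_fin_two] at h_det
    simp only [Matrix.submatrix_apply, Matrix.cons_val_zero, Matrix.cons_val_one,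
      ← hM.isHermitian.apply j i, RCLike.star_def, RCLike.mul_conj, map_sub, RCLike.mul_re, h_real,
      zero_mul, sub_zero] at h_det
    norm_cast at h_det
    linarith
  nlinarith [h_minor, h_diag_nonneg i, h_diag_nonneg j, h_diag_le i, h_diag_le j]

lemma isClosed_setOf_posSemidef [Finite n] : IsClosed {M : Matrix n n 𝕜 | M.PosSemidef} := by
  have := Fintype.ofFinite n
  simp only [Matrix.posSemidef_iff_dotProduct_mulVec, Matrix.IsHermitian, Set.ofPred_and,
    Set.ofPred_forall]
  refine (isClosed_eq (by fun_prop) continuous_id).inter (isClosed_iInter fun x => ?_)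
  exact isClosed_le continuous_const
    (continuous_const.dotProduct (continuous_id.matrix_mulVec continuous_const))

end PosSemidef

lemma isCompact_setOf_isDensity (k : ℕ) :
    IsCompact {M : Matrix (Fin k) (Fin k) ℂ | IsDensity M} := by
  have h_box : IsCompact (Set.univ.pi fun _ : Fin k => Set.univ.pi fun _ : Fin k =>
      Metric.closedBall (0 : ℂ) 1) :=
    isCompact_univ_pi fun _ => isCompact_univ_pi fun _ => isCompact_closedBall 0 1
  refine h_box.of_isClosed_subset ?_ fun M hM i _ j _ => ?_
  · exact isClosed_setOf_posSemidef.inter (isClosed_eq (by fun_prop) continuous_const)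
  · simpa [hM.2] using norm_apply_le_re_trace_of_posSemidef hM.1 i j

lemma convex_setOf_isDensity (k : ℕ) :
    Convex ℝ {M : Matrix (Fin k) (Fin k) ℂ | IsDensity M} := by
  intro M hM N hN a b ha hb hab
  refine ⟨(hM.1.smul ha).add (hN.1.smul hb), ?_⟩
  rw [Matrix.trace_add, Matrix.trace_smul, Matrix.trace_smul, hM.2, hN.2, ← add_smul, hab, one_smul]

section ReTraceMul

variable {n : Type*} [Fintype n]

/-- The real bilinear pairing `(ρ, T) ↦ Re Tr(ρ T)` of a state `ρ` with an observable `T`. -/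
def reTraceMul : Matrix n n ℂ →ₗ[ℝ] Matrix n n ℂ →ₗ[ℝ] ℝ :=
  (LinearMap.mul ℝ (Matrix n n ℂ)).compr₂ (Complex.reLm ∘ₗ Matrix.traceLinearMap n ℝ ℂ)

lemma reTraceMul_apply (M T : Matrix n n ℂ) : reTraceMul M T = (M * T).trace.re := rfl

lemma reTraceMul_cesaroMean (x : ℕ → Matrix n n ℂ) (T : Matrix n n ℂ) (N : ℕ) :
    reTraceMul (cesaroMean x N) T = cesaroMean (fun i => reTraceMul (x i) T) N := by
  rw [← LinearMap.flip_apply reTraceMul, map_cesaroMean]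
  simp only [LinearMap.flip_apply]

lemma continuous_reTraceMul (T : Matrix n n ℂ) : Continuous fun M => reTraceMul M T :=
  Complex.continuous_re.comp (Continuous.matrix_trace (continuous_id.mul continuous_const))

lemma reTraceMul_conj (B M T : Matrix n n ℂ) :
    reTraceMul (B * M * Bᴴ) T = reTraceMul M (Bᴴ * T * B) := by
  rw [reTraceMul_apply, reTraceMul_apply, mul_assoc, mul_assoc, Matrix.trace_mul_comm]
  simp only [mul_assoc]

lemma tendsto_zero_of_forall_reTraceMul_single [DecidableEq n] {α : Type*} {l : Filter α}
    {x : α → Matrix n n ℂ}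
    (h_re : ∀ i j, Tendsto (fun a => reTraceMul (x a) (Matrix.single j i 1)) l (𝓝 0))
    (h_im : ∀ i j, Tendsto (fun a => reTraceMul (x a) (Matrix.single j i (-Complex.I))) l (𝓝 0)) :
    Tendsto x l (𝓝 0) := by
  refine tendsto_pi_nhds.2 fun i => tendsto_pi_nhds.2 fun j => ?_
  have h_entry := (Complex.continuous_ofReal.tendsto' 0 0 Complex.ofReal_zero).comp (h_re i j)
  have h_entry' := (Complex.continuous_ofReal.tendsto' 0 0 Complex.ofReal_zero).comp (h_im i j)
  have h_sum := h_entry.add (h_entry'.mul_const Complex.I)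
  rw [zero_mul, add_zero] at h_sum
  refine h_sum.congr fun a => ?_
  simp [reTraceMul_apply, Matrix.trace_mul_single, Complex.re_add_im]

variable {M : Matrix n n ℂ}

lemma trace_conj_eq_ofReal_reTraceMul (hM : M.PosSemidef) (B : Matrix n n ℂ) :
    (B * M * Bᴴ).trace = (reTraceMul M (Bᴴ * B) : ℂ) := by
  have h_re : reTraceMul M (Bᴴ * B) = (B * M * Bᴴ).trace.re := by
    rw [reTraceMul_apply, Matrix.trace_mul_cycle, Matrix.trace_mul_comm]
  rw [h_re]
  exact Complex.eq_re_of_ofReal_le (hM.mul_mul_conjTranspose_same B).trace_nonneg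

/- The case `Re Tr(M Bᴴ B) = 0` also holds: there `B M Bᴴ` is positive of trace zero. -/
lemma inv_mul_reTraceMul_conj_mul_self (hM : M.PosSemidef) (B T : Matrix n n ℂ) :
    (reTraceMul M (Bᴴ * B))⁻¹ * reTraceMul M (Bᴴ * T * B) * reTraceMul M (Bᴴ * B) =
      reTraceMul M (Bᴴ * T * B) := by
  by_cases h0 : reTraceMul M (Bᴴ * B) = 0
  · have h_conj : B * M * Bᴴ = 0 := by
      rw [← (hM.mul_mul_conjTranspose_same B).trace_eq_zero_iff,
        trace_conj_eq_ofReal_reTraceMul hM, h0, Complex.ofReal_zero]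
    rw [← reTraceMul_conj, h_conj, map_zero, LinearMap.zero_apply, mul_zero, zero_mul]
  · rw [mul_right_comm, inv_mul_cancel₀ h0, one_mul]

lemma reTraceMul_normalized_conj (hM : M.PosSemidef) (B T : Matrix n n ℂ) :
    reTraceMul ((B * M * Bᴴ).trace⁻¹ • (B * M * Bᴴ)) T =
      (reTraceMul M (Bᴴ * B))⁻¹ * reTraceMul M (Bᴴ * T * B) := by
  rw [trace_conj_eq_ofReal_reTraceMul hM, ← Complex.ofReal_inv, Complex.coe_smul, map_smul,
    LinearMap.smul_apply, reTraceMul_conj, smul_eq_mul]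

end ReTraceMul

lemma measurable_reTraceMul {k : ℕ} (T : Matrix (Fin k) (Fin k) ℂ) :
    Measurable fun M => reTraceMul M T := by
  simp only [reTraceMul_apply, Matrix.trace, Matrix.diag, Matrix.mul_apply]
  refine Complex.measurable_re.comp ?_
  exact Finset.measurable_sum _ fun i _ => Finset.measurable_sum _ fun j _ =>
    ((measurable_pi_apply j).comp (measurable_pi_apply i)).mul_const _

lemma exists_abs_reTraceMul_le {k : ℕ} (T : Matrix (Fin k) (Fin k) ℂ) :
    ∃ C : ℝ, ∀ M, IsDensity M → |reTraceMul M T| ≤ C :=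
  (isCompact_setOf_isDensity k).exists_bound_of_continuousOn (continuous_reTraceMul T).continuousOn

lemma reTraceMul_one_of_isDensity {k : ℕ} {M : Matrix (Fin k) (Fin k) ℂ} (hM : IsDensity M) :
    reTraceMul M 1 = 1 := by
  simp [reTraceMul_apply, hM.2]

section KrausMap

variable {ι n : Type*} [Fintype ι] [Fintype n]

/-- The completely positive map `ρ ↦ ∑ j, A j * ρ * (A j)ᴴ` with Kraus operators `A`, as a real
linear map. -/
def krausMap (A : ι → Matrix n n ℂ) : Matrix n n ℂ →ₗ[ℝ] Matrix n n ℂ :=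
  ∑ j, LinearMap.mulLeftRight ℝ (A j, (A j)ᴴ)

lemma krausMap_apply (A : ι → Matrix n n ℂ) (M : Matrix n n ℂ) :
    krausMap A M = ∑ j, A j * M * (A j)ᴴ := by
  simp [krausMap, LinearMap.sum_apply]

lemma continuous_krausMap (A : ι → Matrix n n ℂ) : Continuous (krausMap A) := by
  simp only [funext (krausMap_apply A)]
  fun_prop

lemma reTraceMul_krausMap (A : ι → Matrix n n ℂ) (M T : Matrix n n ℂ) :
    reTraceMul (krausMap A M) T = reTraceMul M (∑ j, (A j)ᴴ * T * A j) := by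
  simp only [krausMap_apply, map_sum, LinearMap.sum_apply, reTraceMul_conj]

end KrausMap

lemma dir_injective (d : ℕ) : Function.Injective (dir d) := by
  intro i i' h
  obtain ⟨i, hi⟩ := i
  obtain ⟨i', hi'⟩ := i'
  rw [Fin.mk.injEq]
  rcases lt_or_ge i d with h_pos | h_neg
  · have h_coord := congrFun h ⟨i, h_pos⟩
    simp only [dir] at h_coord
    split_ifs at h_coord <;> omega
  · have h_coord := congrFun h ⟨i - d, by omega⟩
    simp only [dir] at h_coord
    split_ifs at h_coord <;> omega

section JumpIndicator

variable {d : ℕ} {Ω : Type*}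

/-- The indicator of the event that the walk jumps in direction `j` between the times `n` and
`n + 1`. -/
def jumpIndicator (X : ℕ → Ω → Fin d → ℤ) (n : ℕ) (j : Fin (2 * d)) (ω : Ω) : ℝ :=
  if X (n + 1) ω = X n ω + dir d j then 1 else 0

variable {X : ℕ → Ω → Fin d → ℤ} {n : ℕ} {ω : Ω}

lemma norm_jumpIndicator_le_one (j : Fin (2 * d)) : ‖jumpIndicator X n j ω‖ ≤ 1 := by
  unfold jumpIndicator
  split_ifs <;> simp

lemma sum_jumpIndicator_mul {j : Fin (2 * d)} (hj : X (n + 1) ω = X n ω + dir d j)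
    (g : Fin (2 * d) → ℝ) : ∑ i, jumpIndicator X n i ω * g i = g j := by
  simp [jumpIndicator, hj, (dir_injective d).eq_iff]

lemma sum_jumpIndicator_le_one : ∑ j, jumpIndicator X n j ω ≤ 1 := by
  by_cases h : ∃ j, X (n + 1) ω = X n ω + dir d j
  · obtain ⟨j, hj⟩ := h
    simpa using (sum_jumpIndicator_mul hj fun _ => 1).le
  · push Not at h
    simp [jumpIndicator, h]

end JumpIndicator

/-- The matrix `∑ i, c_i² A_i^* A_i + 2 c_i A_i^* L A_i`, that is, `Γ_l` for arbitrary jump weights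
`c` in place of `e_i·l − m·l`. -/
def jumpVariance {ι n : Type*} [Fintype ι] [Fintype n] (A : ι → Matrix n n ℂ) (c : ι → ℝ)
    (L : Matrix n n ℂ) : Matrix n n ℂ :=
  ∑ i, (c i ^ 2 • ((A i)ᴴ * A i) + (2 * c i) • ((A i)ᴴ * L * A i))

namespace IsQTraj

variable {k d : ℕ} {Ω : Type} {mΩ : MeasurableSpace Ω} {A : Fin (2 * d) → Matrix (Fin k) (Fin k) ℂ}
  {μ : Measure Ω} {ℱ : Filtration ℕ mΩ} {ρ : ℕ → Ω → Matrix (Fin k) (Fin k) ℂ}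
  {X : ℕ → Ω → Fin d → ℤ}

lemma stronglyAdapted_reTraceMul (hQT : IsQTraj A μ ℱ ρ X) (T : Matrix (Fin k) (Fin k) ℂ) :
    StronglyAdapted ℱ fun n ω => reTraceMul (ρ n ω) T :=
  fun n => ((measurable_reTraceMul T).comp (hQT.adapted_ρ n)).stronglyMeasurable

lemma measurable_jumpIndicator (hQT : IsQTraj A μ ℱ ρ X) (n : ℕ) (j : Fin (2 * d)) :
    Measurable (jumpIndicator X n j) := by
  have h_next : Measurable (X (n + 1)) := (hQT.adapted_X (n + 1)).mono (ℱ.le _) le_rfl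
  have h_curr : Measurable (X n) := (hQT.adapted_X n).mono (ℱ.le _) le_rfl
  exact Measurable.ite (measurableSet_eq_fun h_next (h_curr.add_const _)) measurable_const
    measurable_const

lemma exists_ae_abs_reTraceMul_le (hQT : IsQTraj A μ ℱ ρ X) (T : Matrix (Fin k) (Fin k) ℂ) :
    ∃ C : ℝ, ∀ n, ∀ᵐ ω ∂μ, |reTraceMul (ρ n ω) T| ≤ C := by
  obtain ⟨C, hC⟩ := exists_abs_reTraceMul_le T
  exact ⟨C, fun n => (hQT.density n).mono fun ω hω => hC _ hω⟩

lemma condExp_jumpIndicator (hQT : IsQTraj A μ ℱ ρ X) (n : ℕ) (j : Fin (2 * d)) :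
    μ[jumpIndicator X n j | ℱ n] =ᵐ[μ] fun ω => reTraceMul (ρ n ω) ((A j)ᴴ * A j) := by
  filter_upwards [hQT.prob n j, hQT.density n] with ω h_prob h_density
  rw [trace_conj_eq_ofReal_reTraceMul h_density.1, Complex.ofReal_re] at h_prob
  exact h_prob

lemma ae_reTraceMul_add_eq_of_jump (hQT : IsQTraj A μ ℱ ρ X) {n : ℕ}
    {c : Fin (2 * d) → ℝ} {ξ : Ω → ℝ}
    (hξ : ∀ ω j, X (n + 1) ω = X n ω + dir d j → ξ ω = c j)
    (L : Matrix (Fin k) (Fin k) ℂ) :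
    ∀ᵐ ω ∂μ, ∀ j, X (n + 1) ω = X n ω + dir d j →
      reTraceMul (ρ (n + 1) ω) L + ξ ω = reTraceMul (ρ (n + 1) ω) (L + c j • 1) := by
  filter_upwards [hQT.density (n + 1)] with ω h_density j hj
  rw [hξ ω j hj, map_add, map_smul, reTraceMul_one_of_isDensity h_density, smul_eq_mul, mul_one]

section FiniteMeasure

variable [IsFiniteMeasure μ]

lemma memLp_reTraceMul (hQT : IsQTraj A μ ℱ ρ X) (n : ℕ) (T : Matrix (Fin k) (Fin k) ℂ)
    (p : ENNReal) : MemLp (fun ω => reTraceMul (ρ n ω) T) p μ := by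
  obtain ⟨C, hC⟩ := hQT.exists_ae_abs_reTraceMul_le T
  exact .of_bound ((hQT.stronglyAdapted_reTraceMul T n).mono (ℱ.le n)).aestronglyMeasurable C (hC n)

lemma integrable_reTraceMul (hQT : IsQTraj A μ ℱ ρ X) (n : ℕ) (T : Matrix (Fin k) (Fin k) ℂ) :
    Integrable (fun ω => reTraceMul (ρ n ω) T) μ :=
  (hQT.memLp_reTraceMul n T 1).integrable le_rfl

lemma memLp_jumpIndicator (hQT : IsQTraj A μ ℱ ρ X) (n : ℕ) (j : Fin (2 * d)) (p : ENNReal) :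
    MemLp (jumpIndicator X n j) p μ :=
  .of_bound (hQT.measurable_jumpIndicator n j).aestronglyMeasurable 1
    (.of_forall fun _ => norm_jumpIndicator_le_one j)

lemma integrable_jumpIndicator (hQT : IsQTraj A μ ℱ ρ X) (n : ℕ) (j : Fin (2 * d)) :
    Integrable (jumpIndicator X n j) μ :=
  (hQT.memLp_jumpIndicator n j 1).integrable le_rfl

lemma memLp_jumpIndicator_mul (hQT : IsQTraj A μ ℱ ρ X) (n : ℕ) (j : Fin (2 * d))
    (T : Matrix (Fin k) (Fin k) ℂ) (p : ENNReal) :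
    MemLp (fun ω => jumpIndicator X n j ω * reTraceMul (ρ (n + 1) ω) T) p μ :=
  (hQT.memLp_reTraceMul (n + 1) T p).mul (hQT.memLp_jumpIndicator n j ⊤)

lemma condExp_jumpIndicator_mul (hQT : IsQTraj A μ ℱ ρ X) (n : ℕ) (j : Fin (2 * d))
    (T : Matrix (Fin k) (Fin k) ℂ) :
    μ[fun ω => jumpIndicator X n j ω * reTraceMul (ρ (n + 1) ω) T | ℱ n] =ᵐ[μ]
      fun ω => reTraceMul (ρ n ω) ((A j)ᴴ * T * A j) := by
  set next : Ω → ℝ := fun ω =>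
    (reTraceMul (ρ n ω) ((A j)ᴴ * A j))⁻¹ * reTraceMul (ρ n ω) ((A j)ᴴ * T * A j) with h_next
  have h_next_meas : StronglyMeasurable[ℱ n] next :=
    ((hQT.stronglyAdapted_reTraceMul _ n).measurable.inv.mul
      (hQT.stronglyAdapted_reTraceMul _ n).measurable).stronglyMeasurable
  have h_update : (fun ω => jumpIndicator X n j ω * reTraceMul (ρ (n + 1) ω) T) =ᵐ[μ]
      next * jumpIndicator X n j := by
    filter_upwards [hQT.update n j, hQT.density n] with ω h_upd h_density
    simp only [Pi.mul_apply, jumpIndicator]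
    split_ifs with h_jump
    · rw [h_upd h_jump, reTraceMul_normalized_conj h_density.1, one_mul, mul_one]
    · rw [zero_mul, mul_zero]
  have h_integrable := ((hQT.memLp_jumpIndicator_mul n j T 1).integrable le_rfl).congr h_update
  filter_upwards [condExp_congr_ae (m := ℱ n) h_update, condExp_mul_of_stronglyMeasurable_left
    h_next_meas h_integrable (hQT.integrable_jumpIndicator n j), hQT.condExp_jumpIndicator n j,
    hQT.density n] with ω h_congr h_pull h_prob h_density
  rw [h_congr, h_pull, Pi.mul_apply, h_prob, h_next]
  exact inv_mul_reTraceMul_conj_mul_self h_density.1 (A j) T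

lemma ae_tendsto_cesaroMean_condExp_sq_sub (hQT : IsQTraj A μ ℱ ρ X)
    (L : Matrix (Fin k) (Fin k) ℂ) :
    ∀ᵐ ω ∂μ, Tendsto (cesaroMean fun n =>
      μ[fun ω => reTraceMul (ρ (n + 1) ω) L ^ 2 | ℱ n] ω - reTraceMul (ρ n ω) L ^ 2)
      atTop (𝓝 0) := by
  obtain ⟨C, hC⟩ := hQT.exists_ae_abs_reTraceMul_le L
  refine ae_tendsto_cesaroMean_condExp_sub_of_bounded (C := C ^ 2)
    (Y := fun n ω => reTraceMul (ρ n ω) L ^ 2)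
    (fun n => (hQT.stronglyAdapted_reTraceMul L n).pow 2) fun n => ?_
  filter_upwards [hC n] with ω hω
  rw [abs_pow]
  gcongr

end FiniteMeasure

variable [IsProbabilityMeasure μ]

lemma integral_sum_jumpIndicator (hQT : IsQTraj A μ ℱ ρ X) (hA : ∑ j, (A j)ᴴ * A j = 1) (n : ℕ) :
    ∫ ω, ∑ j, jumpIndicator X n j ω ∂μ = 1 :=
  calc ∫ ω, ∑ j, jumpIndicator X n j ω ∂μ
      = ∑ j, ∫ ω, μ[jumpIndicator X n j | ℱ n] ω ∂μ := by
        rw [integral_finsetSum _ fun j _ => hQT.integrable_jumpIndicator n j]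
        simp only [integral_condExp (ℱ.le n)]
    _ = ∑ j, ∫ ω, reTraceMul (ρ n ω) ((A j)ᴴ * A j) ∂μ :=
        sum_congr rfl fun j _ => integral_congr_ae (hQT.condExp_jumpIndicator n j)
    _ = ∫ ω, reTraceMul (ρ n ω) 1 ∂μ := by
        rw [← integral_finsetSum _ fun j _ => hQT.integrable_reTraceMul n _]
        simp only [← map_sum, hA]
    _ = ∫ _, 1 ∂μ :=
        integral_congr_ae ((hQT.density n).mono fun ω hω => reTraceMul_one_of_isDensity hω)
    _ = 1 := by simp

lemma ae_exists_jump (hQT : IsQTraj A μ ℱ ρ X) (hA : ∑ j, (A j)ᴴ * A j = 1) (n : ℕ) :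
    ∀ᵐ ω ∂μ, ∃ j, X (n + 1) ω = X n ω + dir d j := by
  have h_eq : (fun ω => ∑ j, jumpIndicator X n j ω) =ᵐ[μ] fun _ => 1 := by
    refine (integral_eq_iff_of_ae_le (integrable_finsetSum _ fun j _ =>
      hQT.integrable_jumpIndicator n j) (integrable_const 1)
      (.of_forall fun _ => sum_jumpIndicator_le_one)).1 ?_
    rw [hQT.integral_sum_jumpIndicator hA n]
    simp
  filter_upwards [h_eq] with ω hω
  by_contra! h_none
  simp [jumpIndicator, h_none] at hω

section JumpFunction

variable {n : ℕ} {f : Ω → ℝ} {T : Fin (2 * d) → Matrix (Fin k) (Fin k) ℂ}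

lemma ae_eq_sum_jumpIndicator_mul (hQT : IsQTraj A μ ℱ ρ X) (hA : ∑ j, (A j)ᴴ * A j = 1)
    (hf : ∀ᵐ ω ∂μ, ∀ j, X (n + 1) ω = X n ω + dir d j → f ω = reTraceMul (ρ (n + 1) ω) (T j)) :
    f =ᵐ[μ] ∑ j, fun ω => jumpIndicator X n j ω * reTraceMul (ρ (n + 1) ω) (T j) := by
  filter_upwards [hf, hQT.ae_exists_jump hA n] with ω hω ⟨j, hj⟩
  rw [hω j hj, Finset.sum_apply, sum_jumpIndicator_mul hj]

lemma memLp_of_forall_jump (hQT : IsQTraj A μ ℱ ρ X) (hA : ∑ j, (A j)ᴴ * A j = 1)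
    (hf : ∀ᵐ ω ∂μ, ∀ j, X (n + 1) ω = X n ω + dir d j → f ω = reTraceMul (ρ (n + 1) ω) (T j))
    (p : ENNReal) : MemLp f p μ :=
  (memLp_finsetSum' _ fun j _ => hQT.memLp_jumpIndicator_mul n j (T j) p).ae_eq
    (hQT.ae_eq_sum_jumpIndicator_mul hA hf).symm

lemma condExp_of_forall_jump (hQT : IsQTraj A μ ℱ ρ X) (hA : ∑ j, (A j)ᴴ * A j = 1)
    (hf : ∀ᵐ ω ∂μ, ∀ j, X (n + 1) ω = X n ω + dir d j → f ω = reTraceMul (ρ (n + 1) ω) (T j)) :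
    μ[f | ℱ n] =ᵐ[μ] fun ω => reTraceMul (ρ n ω) (∑ j, (A j)ᴴ * T j * A j) := by
  filter_upwards [condExp_congr_ae (m := ℱ n) (hQT.ae_eq_sum_jumpIndicator_mul hA hf),
    condExp_finsetSum (s := univ)
      (fun j _ => (hQT.memLp_jumpIndicator_mul n j (T j) 1).integrable le_rfl) (ℱ n),
    ae_all_iff.2 fun j => hQT.condExp_jumpIndicator_mul n j (T j)] with ω h_congr h_sum h_jump
  rw [h_congr, h_sum, Finset.sum_apply, map_sum]
  exact sum_congr rfl fun j _ => h_jump j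

end JumpFunction

lemma condExp_reTraceMul_succ (hQT : IsQTraj A μ ℱ ρ X) (hA : ∑ j, (A j)ᴴ * A j = 1) (n : ℕ)
    (T : Matrix (Fin k) (Fin k) ℂ) :
    μ[fun ω => reTraceMul (ρ (n + 1) ω) T | ℱ n] =ᵐ[μ]
      fun ω => reTraceMul (krausMap A (ρ n ω)) T := by
  simp only [reTraceMul_krausMap]
  exact hQT.condExp_of_forall_jump hA (.of_forall fun _ _ _ => rfl)

lemma ae_tendsto_cesaroMean_reTraceMul_sub_krausMap (hQT : IsQTraj A μ ℱ ρ X)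
    (hA : ∑ j, (A j)ᴴ * A j = 1) (T : Matrix (Fin k) (Fin k) ℂ) :
    ∀ᵐ ω ∂μ, Tendsto
      (fun n => reTraceMul (cesaroMean (fun i => ρ (i + 1) ω - krausMap A (ρ i ω)) n) T)
      atTop (𝓝 0) := by
  obtain ⟨C, hC⟩ := hQT.exists_ae_abs_reTraceMul_le T
  filter_upwards [ae_tendsto_cesaroMean_sub_condExp_of_bounded
    (hQT.stronglyAdapted_reTraceMul T) hC,
    ae_all_iff.2 fun n => hQT.condExp_reTraceMul_succ hA n T] with ω h_slln h_condExp
  refine h_slln.congr fun n => ?_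
  simp only [reTraceMul_cesaroMean, map_sub, LinearMap.sub_apply, h_condExp]

lemma ae_tendsto_cesaroMean_state (hQT : IsQTraj A μ ℱ ρ X) (hA : ∑ j, (A j)ᴴ * A j = 1)
    {ρinf : Matrix (Fin k) (Fin k) ℂ}
    (huniq : ∀ σ, IsDensity σ → ∑ j, A j * σ * (A j)ᴴ = σ → σ = ρinf) :
    ∀ᵐ ω ∂μ, Tendsto (cesaroMean fun n => ρ n ω) atTop (𝓝 ρinf) := by
  filter_upwards [ae_all_iff.2 hQT.density,
    ae_all_iff.2 fun i => ae_all_iff.2 fun j =>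
      hQT.ae_tendsto_cesaroMean_reTraceMul_sub_krausMap hA (Matrix.single j i 1),
    ae_all_iff.2 fun i => ae_all_iff.2 fun j =>
      hQT.ae_tendsto_cesaroMean_reTraceMul_sub_krausMap hA (Matrix.single j i (-Complex.I))]
    with ω h_density h_re h_im
  refine tendsto_cesaroMean_of_unique_fixedPoint (isCompact_setOf_isDensity k)
    (convex_setOf_isDensity k) (continuous_krausMap A) ?_ h_density
    (tendsto_zero_of_forall_reTraceMul_single h_re h_im)
  exact fun σ hσ h_fixed => huniq σ hσ (by rwa [krausMap_apply] at h_fixed)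

section Corrector

variable {c : Fin (2 * d) → ℝ} {L : Matrix (Fin k) (Fin k) ℂ} {n : ℕ} {ξ : Ω → ℝ}

lemma condExp_reTraceMul_add (hQT : IsQTraj A μ ℱ ρ X) (hA : ∑ j, (A j)ᴴ * A j = 1)
    (hL : L - ∑ j, (A j)ᴴ * L * A j = ∑ j, c j • ((A j)ᴴ * A j))
    (hξ : ∀ ω j, X (n + 1) ω = X n ω + dir d j → ξ ω = c j) :
    μ[fun ω => reTraceMul (ρ (n + 1) ω) L + ξ ω | ℱ n] =ᵐ[μ] fun ω => reTraceMul (ρ n ω) L := by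
  have h_poisson : ∑ j, (A j)ᴴ * (L + c j • 1) * A j = L := by
    simp only [mul_add, add_mul, sum_add_distrib, mul_smul_comm, smul_mul_assoc, mul_one, ← hL]
    exact add_sub_cancel _ _
  have h_condExp := hQT.condExp_of_forall_jump hA (hQT.ae_reTraceMul_add_eq_of_jump hξ L)
  rwa [h_poisson] at h_condExp

lemma condExp_reTraceMul_add_sq (hQT : IsQTraj A μ ℱ ρ X) (hA : ∑ j, (A j)ᴴ * A j = 1)
    (hξ : ∀ ω j, X (n + 1) ω = X n ω + dir d j → ξ ω = c j) :
    μ[fun ω => (reTraceMul (ρ (n + 1) ω) L + ξ ω) ^ 2 | ℱ n] =ᵐ[μ]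
      fun ω => μ[fun ω => reTraceMul (ρ (n + 1) ω) L ^ 2 | ℱ n] ω +
        reTraceMul (ρ n ω) (jumpVariance A c L) := by
  set excess : Ω → ℝ := fun ω => ξ ω ^ 2 + 2 * ξ ω * reTraceMul (ρ (n + 1) ω) L
  have h_split : (fun ω => (reTraceMul (ρ (n + 1) ω) L + ξ ω) ^ 2) =
      (fun ω => reTraceMul (ρ (n + 1) ω) L ^ 2) + excess := by
    ext ω
    simp only [Pi.add_apply, excess]
    ring
  have h_jump : ∀ᵐ ω ∂μ, ∀ j, X (n + 1) ω = X n ω + dir d j →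
      excess ω = reTraceMul (ρ (n + 1) ω) (c j ^ 2 • 1 + (2 * c j) • L) := by
    filter_upwards [hQT.density (n + 1)] with ω h_density j hj
    simp only [excess, hξ ω j hj, map_add, map_smul, reTraceMul_one_of_isDensity h_density,
      smul_eq_mul, mul_one]
  have h_variance : ∑ j, (A j)ᴴ * (c j ^ 2 • 1 + (2 * c j) • L) * A j = jumpVariance A c L := by
    simp only [jumpVariance, mul_add, add_mul, mul_smul_comm, smul_mul_assoc, mul_one]
  have h_excess := hQT.condExp_of_forall_jump hA h_jump
  rw [h_variance] at h_excess
  rw [h_split]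
  filter_upwards [condExp_add (hQT.memLp_reTraceMul (n + 1) L 2).integrable_sq
    ((hQT.memLp_of_forall_jump hA h_jump 1).integrable le_rfl) (ℱ n), h_excess] with ω h_add h_exc
  rw [h_add, Pi.add_apply, h_exc]

lemma condExp_increment_sq (hQT : IsQTraj A μ ℱ ρ X) (hA : ∑ j, (A j)ᴴ * A j = 1)
    (hL : L - ∑ j, (A j)ᴴ * L * A j = ∑ j, c j • ((A j)ᴴ * A j))
    (hξ : ∀ ω j, X (n + 1) ω = X n ω + dir d j → ξ ω = c j) :
    μ[fun ω => (reTraceMul (ρ (n + 1) ω) L - reTraceMul (ρ n ω) L + ξ ω) ^ 2 | ℱ n] =ᵐ[μ]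
      fun ω => μ[fun ω => reTraceMul (ρ (n + 1) ω) L ^ 2 | ℱ n] ω - reTraceMul (ρ n ω) L ^ 2 +
        reTraceMul (ρ n ω) (jumpVariance A c L) := by
  set Q : Ω → ℝ := fun ω => reTraceMul (ρ (n + 1) ω) L + ξ ω
  have hQ_condExp : μ[Q | ℱ n] =ᵐ[μ] fun ω => reTraceMul (ρ n ω) L :=
    hQT.condExp_reTraceMul_add hA hL hξ
  have hQ_memLp : MemLp Q 2 μ :=
    hQT.memLp_of_forall_jump hA (hQT.ae_reTraceMul_add_eq_of_jump hξ L) 2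
  have h_condVar : μ[fun ω => (reTraceMul (ρ (n + 1) ω) L - reTraceMul (ρ n ω) L + ξ ω) ^ 2 | ℱ n]
      =ᵐ[μ] Var[Q; μ | ℱ n] := by
    refine condExp_congr_ae ?_
    filter_upwards [hQ_condExp] with ω hω
    rw [Pi.pow_apply, Pi.sub_apply, hω, add_sub_right_comm]
  have hQ_condExp_sq : μ[Q ^ 2 | ℱ n] =ᵐ[μ] fun ω =>
      μ[fun ω => reTraceMul (ρ (n + 1) ω) L ^ 2 | ℱ n] ω +
        reTraceMul (ρ n ω) (jumpVariance A c L) :=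
    hQT.condExp_reTraceMul_add_sq hA hξ
  filter_upwards [h_condVar, ProbabilityTheory.condVar_ae_eq_condExp_sq_sub_sq_condExp (ℱ.le n)
    hQ_memLp, hQ_condExp_sq, hQ_condExp] with ω h_var h_sub h_sq h_mean
  rw [h_var, h_sub, Pi.sub_apply, Pi.pow_apply, h_mean, h_sq, add_sub_right_comm]

end Corrector

theorem ae_tendsto_cesaroMean_condExp_increment_sq (hQT : IsQTraj A μ ℱ ρ X)
    (hA : ∑ j, (A j)ᴴ * A j = 1) {ρinf L : Matrix (Fin k) (Fin k) ℂ} {c : Fin (2 * d) → ℝ}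
    (huniq : ∀ σ, IsDensity σ → ∑ j, A j * σ * (A j)ᴴ = σ → σ = ρinf)
    (hL : L - ∑ j, (A j)ᴴ * L * A j = ∑ j, c j • ((A j)ᴴ * A j)) {ξ : ℕ → Ω → ℝ}
    (hξ : ∀ n ω j, X (n + 1) ω = X n ω + dir d j → ξ n ω = c j) :
    ∀ᵐ ω ∂μ, Tendsto (cesaroMean fun n =>
      μ[fun ω => (reTraceMul (ρ (n + 1) ω) L - reTraceMul (ρ n ω) L + ξ n ω) ^ 2 | ℱ n] ω)
      atTop (𝓝 (reTraceMul ρinf (jumpVariance A c L))) := by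
  filter_upwards [ae_all_iff.2 fun n => hQT.condExp_increment_sq hA hL (hξ n),
    hQT.ae_tendsto_cesaroMean_condExp_sq_sub L, hQT.ae_tendsto_cesaroMean_state hA huniq]
    with ω h_condExp h_corrector h_state
  have h_variance := ((continuous_reTraceMul (jumpVariance A c L)).tendsto ρinf).comp h_state
  have h_sum := h_corrector.add h_variance
  rw [zero_add] at h_sum
  refine h_sum.congr fun n => ?_
  simp only [Function.comp_apply, reTraceMul_cesaroMean, ← cesaroMean_add, h_condExp]

end IsQTraj

section CenteredStep

variable {k d : ℕ} {A : Fin (2 * d) → Matrix (Fin k) (Fin k) ℂ} {ρinf : Matrix (Fin k) (Fin k) ℂ}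

/-- The weight `e_i·l − m·l` of a step in direction `i`. -/
def centeredStep (A : Fin (2 * d) → Matrix (Fin k) (Fin k) ℂ) (ρinf : Matrix (Fin k) (Fin k) ℂ)
    (l : Fin d → ℝ) (i : Fin (2 * d)) : ℝ :=
  (∑ j, dirR d i j * l j) - ∑ j, mvec A ρinf j * l j

lemma jumpVariance_centeredStep (Ll : Matrix (Fin k) (Fin k) ℂ) (l : Fin d → ℝ) :
    jumpVariance A (centeredStep A ρinf l) Ll = Gammal A ρinf Ll l := rfl

lemma sum_centeredStep_smul (hA : ∑ j, (A j)ᴴ * A j = 1) (l : Fin d → ℝ) :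
    ∑ i, centeredStep A ρinf l i • ((A i)ᴴ * A i) =
      (∑ i, (∑ j, dirR d i j * l j) • ((A i)ᴴ * A i)) - (∑ j, mvec A ρinf j * l j) • 1 := by
  simp only [centeredStep, sub_smul, sum_sub_distrib, ← smul_sum, hA]

lemma sum_sub_mvec_mul_of_jump {x y : Fin d → ℤ} {i : Fin (2 * d)} (h : y = x + dir d i)
    (l : Fin d → ℝ) :
    ∑ j, (((y j - x j : ℤ) : ℝ) - mvec A ρinf j) * l j = centeredStep A ρinf l i := by
  simp only [h, Pi.add_apply, add_sub_cancel_left, sub_mul, sum_sub_distrib, centeredStep, dirR]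

end CenteredStep

/-- The normalized predictable quadratic variation of the martingale
converges almost surely: `(1/n) Σ_{k=2}^n E[(ΔM_k)² | F_{k-1}] → σ_l² = Re Tr(ρ_∞ Γ_l)`. -/
theorem stmt11 {k d : ℕ} (hd : 1 ≤ d)
    (A : Fin (2 * d) → Matrix (Fin k) (Fin k) ℂ)
    (hA : ∑ j, (A j)ᴴ * A j = 1)
    (ρinf : Matrix (Fin k) (Fin k) ℂ) (hρinf : IsDensity ρinf)
    (hinv : (∑ j, A j * ρinf * (A j)ᴴ) = ρinf)
    (huniq : ∀ σ, IsDensity σ → (∑ j, A j * σ * (A j)ᴴ) = σ → σ = ρinf)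
    (l : Fin d → ℝ) (Ll : Matrix (Fin k) (Fin k) ℂ)
    (hLl : Ll - (∑ i, (A i)ᴴ * Ll * A i) =
      (∑ i, (∑ j, dirR d i j * l j) • ((A i)ᴴ * A i)) -
        (∑ j, mvec A ρinf j * l j) • (1 : Matrix (Fin k) (Fin k) ℂ))
    {Ω : Type} {mΩ : MeasurableSpace Ω} (μ : Measure Ω) [IsProbabilityMeasure μ]
    (ℱ : Filtration ℕ mΩ)
    (ρ : ℕ → Ω → Matrix (Fin k) (Fin k) ℂ) (X : ℕ → Ω → Fin d → ℤ)
    (hQT : IsQTraj A μ ℱ ρ X)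
    (DM : ℕ → Ω → ℝ)
    (hDM : ∀ (s : ℕ) (ω : Ω), DM s ω =
      ((ρ s ω * Ll).trace).re - ((ρ (s - 1) ω * Ll).trace).re +
        ∑ j, (((X s ω j - X (s - 1) ω j : ℤ) : ℝ) - mvec A ρinf j) * l j) :
    ∀ᵐ ω ∂μ,
      Tendsto
        (fun n : ℕ =>
          (n : ℝ)⁻¹ * ∑ s ∈ Finset.Icc 2 n, (μ[fun ω' => (DM s ω') ^ 2 | ℱ (s - 1)]) ω)
        atTop (nhds (((ρinf * Gammal A ρinf Ll l).trace).re)) := by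
  have h_poisson : Ll - ∑ i, (A i)ᴴ * Ll * A i =
      ∑ i, centeredStep A ρinf l i • ((A i)ᴴ * A i) := by
    rw [hLl, sum_centeredStep_smul hA]
  filter_upwards [hQT.ae_tendsto_cesaroMean_condExp_increment_sq hA huniq h_poisson
    fun n ω i h_jump => sum_sub_mvec_mul_of_jump h_jump l] with ω h_cesaro
  rw [jumpVariance_centeredStep] at h_cesaro
  refine (tendsto_inv_smul_sum_Icc_two h_cesaro).congr fun n => ?_
  rw [smul_eq_mul]
  congr 1
  refine sum_congr rfl fun s hs => ?_
  have h_succ : s - 1 + 1 = s := Nat.sub_add_cancel (one_le_two.trans (mem_Icc.1 hs).1)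
  simp only [h_succ, hDM, reTraceMul_apply]
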